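/- Let χ be a non-principal Dirichlet character modulo a prime p, and let q_1 be the smallest prime non-residue of χ. Then q_1 < 4.7·p^{1/4}·log p. -/

import Mathlib

/-!
Let `q` be the least prime non-residue. All integers `1 ≤ N < q` lie in the kernel of `χ`, so
`N ^ m = 1` modulo `p` for `m = (p - 1) / ℓ`, where `ℓ` is the index of the kernel. If
`b * x = a * p + N` with `0 < b, N < q`, then `x` is in the kernel as well; the integers
following `⌊a * p / b⌋`, for reduced fractions `a / b` of small denominator, therefore produce many
`x` such that `x + 1, …, x + H` are all `m`-th roots of unity: at least about `q ^ 2 / (8 * H)`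
for any small `H`.

Stepanov's method bounds the number of such `x` in a finite field with `p` elements. The auxiliary
polynomial `∑ f (e, j) * X ^ (p * j) * ∏ h, (X + h) ^ (m * e h)` is made to vanish to order about
`√p` at each of them: on these points `X ^ p = X` and `(X + h) ^ m = 1`, so each derivative imposes
few linear conditions on the `f (e, j)`. It is nonzero because, modulo `X ^ p`, the power
`(X + h) ^ m` behaves like the radical `(h / (X + h)) ^ (1 / ℓ)`. By Kummer theory the monomials
in these radicals are linearly independent over the rational functions, so multiplication by a
nonzero combination of them has a nonzero determinant; its degree is less than `p`, whereas it would
be divisible by `X ^ p` if the combination vanished modulo `X ^ p`. With `H` about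
`log p / (2 * log ℓ)` the two bounds together give `q ≪ p ^ (1 / 4) * log p`.
-/

open Polynomial Finset Matrix

section Kummer

variable {F Ω : Type*} [Field F] [Field Ω] [Algebra F Ω]

/-- The character `σ ↦ σ v / v` of the Galois group attached to a common eigenvector `v` of all
automorphisms, as in Kummer theory. -/
def eigenvectorCharacter (v : Ω) (hv0 : v ≠ 0) (hv : ∀ σ : Ω ≃ₐ[F] Ω, ∃ c : F, σ v = c • v) :
    (Ω ≃ₐ[F] Ω) →* Ω where
  toFun σ := σ v / v
  map_one' := div_self hv0
  map_mul' σ τ := by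
    obtain ⟨c, hc⟩ := hv τ
    rw [AlgEquiv.mul_apply, hc, map_smul, Algebra.smul_def, Algebra.smul_def]
    field_simp

theorem eigenvectorCharacter_apply {v : Ω} (hv0 : v ≠ 0)
    (hv : ∀ σ : Ω ≃ₐ[F] Ω, ∃ c : F, σ v = c • v) (σ : Ω ≃ₐ[F] Ω) :
    eigenvectorCharacter v hv0 hv σ = σ v / v := rfl

theorem linearIndependent_of_galois_eigenvectors [IsGalois F Ω] {κ : Type*} {v : κ → Ω}
    (hv0 : ∀ k, v k ≠ 0) (hv : ∀ k, ∀ σ : Ω ≃ₐ[F] Ω, ∃ c : F, σ (v k) = c • v k)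
    (hdiv : ∀ k l, v k / v l ∈ Set.range (algebraMap F Ω) → k = l) :
    LinearIndependent F v := by
  let ψ : κ → (Ω ≃ₐ[F] Ω) →* Ω := fun k ↦ eigenvectorCharacter (v k) (hv0 k) (hv k)
  have hψ : Function.Injective ψ := fun k l hkl ↦ hdiv k l <|
    (InfiniteGalois.mem_range_algebraMap_iff_fixed _).2 fun σ ↦ by
      have hσ : σ (v k) / v k = σ (v l) / v l := DFunLike.congr_fun hkl σ
      have hvk := hv0 k
      have hvl := hv0 l
      have hσl : σ (v l) ≠ 0 := (map_ne_zero σ).2 hvl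
      rw [map_div₀]
      field_simp at hσ ⊢
      linear_combination hσ
  rw [linearIndependent_iff']
  intro s c hc k hk
  have dedekind := (linearIndependent_iff'.1
    ((linearIndependent_monoidHom (Ω ≃ₐ[F] Ω) Ω).comp ψ hψ)) s (fun k ↦ c k • v k) <| by
      ext σ
      simpa [ψ, eigenvectorCharacter_apply, Finset.sum_apply, hv0, mul_div_cancel₀]
        using congrArg σ hc
  exact (smul_eq_zero.1 (dedekind k hk)).resolve_right (hv0 k)

theorem linearIndependent_of_pow_mem_range [IsGalois F Ω] {ℓ : ℕ} [NeZero ℓ] {ζ : F}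
    (hζ : IsPrimitiveRoot ζ ℓ) {κ : Type*} {v : κ → Ω} (hv0 : ∀ k, v k ≠ 0)
    (hv : ∀ k, v k ^ ℓ ∈ Set.range (algebraMap F Ω))
    (hdiv : ∀ k l, v k / v l ∈ Set.range (algebraMap F Ω) → k = l) :
    LinearIndependent F v := by
  refine linearIndependent_of_galois_eigenvectors hv0 (fun k σ ↦ ?_) hdiv
  obtain ⟨b, hb⟩ := hv k
  have hroot : (σ (v k) / v k) ^ ℓ = 1 := by
    rw [div_pow, ← map_pow, ← hb, AlgEquiv.commutes, hb, div_self (pow_ne_zero _ (hv0 k))]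
  obtain ⟨i, -, hi⟩ :=
    (hζ.map_of_injective (algebraMap F Ω).injective).eq_pow_of_pow_eq_one hroot
  exact ⟨ζ ^ i, by rw [Algebra.smul_def, map_pow, hi, div_mul_cancel₀ _ (hv0 k)]⟩

end Kummer

section Determinants

theorem natDegree_det_le_card_mul {n R : Type*} [Fintype n] [DecidableEq n] [CommRing R]
    {M : Matrix n n R[X]} {k : ℕ} (hM : ∀ i j, (M i j).natDegree ≤ k) :
    M.det.natDegree ≤ Fintype.card n * k := by
  rw [Matrix.det_apply]
  refine natDegree_sum_le_of_forall_le _ _ fun σ _ ↦ (natDegree_smul_le _ _).trans ?_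
  calc (∏ i, M (σ i) i).natDegree ≤ ∑ i, (M (σ i) i).natDegree := natDegree_prod_le _ _
    _ ≤ Fintype.card n * k := by
      simpa using sum_le_sum fun i (_ : i ∈ univ) ↦ hM (σ i) i

theorem dvd_det_of_dvd_mulVec {n A : Type*} [Fintype n] [DecidableEq n] [CommRing A] {x : A}
    {M : Matrix n n A} {v : n → A} (hMv : ∀ i, x ∣ M.mulVec v i) {i : n} (hi : v i = 1) :
    x ∣ M.det := by
  have hadj : M.adjugate.mulVec (M.mulVec v) = M.det • v := by
    rw [Matrix.mulVec_mulVec, Matrix.adjugate_mul, Matrix.smul_mulVec, Matrix.one_mulVec]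
  have hdet : M.det = M.adjugate.mulVec (M.mulVec v) i := by simp [hadj, hi]
  rw [hdet]
  exact dvd_sum fun j _ ↦ (hMv j).mul_left _

end Determinants

section Monomials

variable {ι R : Type*} [Fintype ι] {ℓ : ℕ}

/-- The monomial `∏ h, w h ^ e h`, with exponents `0 ≤ e h < ℓ`. -/
def reducedMonomial [CommMonoid R] (w : ι → R) (e : ι → Fin ℓ) : R := ∏ h, w h ^ (e h : ℕ)

/-- The polynomial `∏ h, (X + a h)`, a common denominator for the radicals `a h / (X + a h)`. -/
noncomputable def shiftProd [CommSemiring R] (a : ι → R) : R[X] := ∏ h, (X + C (a h))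

/-- The structure constants of the multiplication of reduced monomials in radicals `w h` with
`(X + a h) * w h ^ ℓ = a h`, after multiplication by the common denominator `shiftProd a`. -/
noncomputable def carry [CommSemiring R] (a : ι → R) (d e : ι → Fin ℓ) : R[X] :=
  ∏ h, if (d h : ℕ) + e h < ℓ then X + C (a h) else C (a h)

/-- The matrix, in the basis of reduced monomials in the radicals `w h`, of multiplication by
`shiftProd a * ∑ d, f d * reducedMonomial w d`. -/
noncomputable def monomialMulMatrix [CommSemiring R] [NeZero ℓ] (a : ι → R)
    (f : (ι → Fin ℓ) → R[X]) : Matrix (ι → Fin ℓ) (ι → Fin ℓ) R[X] :=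
  Matrix.of fun e r ↦ f (r - e) * carry a (r - e) e

theorem map_carry_mul_reducedMonomial_add [CommRing R] [NeZero ℓ] {S : Type*} [CommRing S]
    (φ : R[X] →+* S) {a : ι → R} {w : ι → S}
    (hw : ∀ h, φ (X + C (a h)) * w h ^ ℓ = φ (C (a h))) (d e : ι → Fin ℓ) :
    φ (carry a d e) * reducedMonomial w (d + e) =
      φ (shiftProd a) * (reducedMonomial w d * reducedMonomial w e) := by
  simp only [carry, shiftProd, reducedMonomial, map_prod, ← prod_mul_distrib]
  refine prod_congr rfl fun h _ ↦ ?_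
  rw [Pi.add_apply, ← pow_add]
  split_ifs with hlt
  · rw [Fin.val_add_eq_of_add_lt hlt]
  · rw [Fin.val_add_eq_ite, if_pos (not_lt.1 hlt), ← hw, mul_assoc, ← pow_add]
    congr 2
    omega

theorem monomialMulMatrix_mulVec_reducedMonomial [CommRing R] [NeZero ℓ]
    [DecidableEq ι] {S : Type*} [CommRing S] (φ : R[X] →+* S) {a : ι → R} {w : ι → S}
    (hw : ∀ h, φ (X + C (a h)) * w h ^ ℓ = φ (C (a h))) (f : (ι → Fin ℓ) → R[X]) :
    ((monomialMulMatrix a f).map φ).mulVec (reducedMonomial w) =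
      (φ (shiftProd a) * ∑ d, φ (f d) * reducedMonomial w d) • reducedMonomial w := by
  ext e
  rw [Matrix.mulVec, dotProduct, ← Equiv.sum_comp (Equiv.addRight e), Pi.smul_apply, smul_eq_mul,
    mul_sum, sum_mul]
  refine sum_congr rfl fun d _ ↦ ?_
  simp only [Equiv.coe_addRight, monomialMulMatrix, Matrix.map_apply, Matrix.of_apply,
    add_sub_cancel_right, map_mul, mul_assoc, map_carry_mul_reducedMonomial_add φ hw]
  ring

theorem det_monomialMulMatrix_ne_zero_of_linearIndependent [CommRing R] [IsDomain R]
    [NeZero ℓ] [DecidableEq ι] {S : Type*} [CommRing S] [IsDomain S] [Algebra R[X] S]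
    {a : ι → R} {w : ι → S}
    (hshift : algebraMap R[X] S (shiftProd a) ≠ 0)
    (hw : ∀ h, algebraMap R[X] S (X + C (a h)) * w h ^ ℓ = algebraMap R[X] S (C (a h)))
    (hind : LinearIndependent R[X] (reducedMonomial (ℓ := ℓ) w)) {f : (ι → Fin ℓ) → R[X]}
    (hf : f ≠ 0) : (monomialMulMatrix a f).det ≠ 0 := by
  have hne {g : (ι → Fin ℓ) → R[X]} (hg : g ≠ 0) :
      ∑ e, algebraMap R[X] S (g e) * reducedMonomial w e ≠ 0 := fun h0 ↦ hg <| funext <|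
    Fintype.linearIndependent_iff.1 hind g (by simpa only [Algebra.smul_def] using h0)
  intro hdet
  obtain ⟨g, hg0, hg⟩ := Matrix.exists_vecMul_eq_zero_iff.2 hdet
  have hvec :
      (algebraMap R[X] S ∘ g) ᵥ* (monomialMulMatrix a f).map (algebraMap R[X] S) = 0 := by
    ext r
    rw [← RingHom.map_vecMul, hg, Pi.zero_apply, map_zero, Pi.zero_apply]
  have hmul := congrArg ((algebraMap R[X] S ∘ g) ⬝ᵥ ·)
    (monomialMulMatrix_mulVec_reducedMonomial (algebraMap R[X] S) hw f)
  simp only [Matrix.dotProduct_mulVec, hvec, zero_dotProduct, dotProduct_smul, smul_eq_mul]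
    at hmul
  exact mul_ne_zero (mul_ne_zero hshift (hne hf)) (hne hg0) hmul.symm

theorem natDegree_carry_le [CommRing R] [Nontrivial R] (a : ι → R) (d e : ι → Fin ℓ) :
    (carry a d e).natDegree ≤ Fintype.card ι := by
  refine (natDegree_prod_le _ _).trans ((sum_le_card_nsmul _ _ 1 fun h _ ↦ ?_).trans (by simp))
  split_ifs <;> simp

theorem natDegree_monomialMulMatrix_le [CommRing R] [Nontrivial R] [NeZero ℓ] (a : ι → R)
    {f : (ι → Fin ℓ) → R[X]} {D : ℕ} (hf : ∀ e, (f e).natDegree ≤ D) (e r : ι → Fin ℓ) :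
    (monomialMulMatrix a f e r).natDegree ≤ D + Fintype.card ι :=
  natDegree_mul_le.trans (add_le_add (hf _) (natDegree_carry_le a _ _))

end Monomials

section Radicals

variable {ι F : Type*} [Fintype ι] [Field F] {ℓ : ℕ} {a : ι → F}

theorem rootMultiplicity_prod_X_add_C_pow (ha : Function.Injective a) (k : ι → ℕ) (i : ι) :
    rootMultiplicity (-a i) (∏ j, (X + C (a j)) ^ k j) = k i := by
  classical
  have hfactor (j : ι) : (X + C (a j)) ^ k j ≠ 0 := pow_ne_zero _ (X_add_C_ne_zero _)
  have hrest : ¬ IsRoot (∏ j ∈ univ.erase i, (X + C (a j)) ^ k j) (-a i) := by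
    simp only [IsRoot, eval_prod, eval_pow, eval_add, eval_X, eval_C, prod_eq_zero_iff]
    rintro ⟨j, hj, hj0⟩
    exact (mem_erase.1 hj).1 (ha (by linear_combination eq_zero_of_pow_eq_zero hj0))
  rw [← prod_erase_mul _ _ (mem_univ i), ← sub_neg_eq_add X, ← C_neg,
    rootMultiplicity_mul_X_sub_C_pow (prod_ne_zero_iff.2 fun j _ ↦ hfactor j),
    rootMultiplicity_eq_zero hrest, zero_add]

theorem rootMultiplicity_C_mul_pow_mul_prod_X_add_C_pow (ha : Function.Injective a) {c : F}
    (hc : c ≠ 0) {u : F[X]} (hu : u ≠ 0) (k : ι → ℕ) (i : ι) :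
    rootMultiplicity (-a i) (C c * u ^ ℓ * ∏ j, (X + C (a j)) ^ k j) =
      ℓ * rootMultiplicity (-a i) u + k i := by
  classical
  have hprod : ∏ j, (X + C (a j)) ^ k j ≠ 0 :=
    prod_ne_zero_iff.2 fun j _ ↦ pow_ne_zero _ (X_add_C_ne_zero _)
  have hCu : C c * u ^ ℓ ≠ 0 := mul_ne_zero (C_ne_zero.2 hc) (pow_ne_zero _ hu)
  rw [rootMultiplicity_mul (mul_ne_zero hCu hprod), rootMultiplicity_mul hCu, rootMultiplicity_C,
    rootMultiplicity_prod_X_add_C_pow ha, ← count_roots, roots_pow, Multiset.count_nsmul,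
    count_roots, zero_add]

theorem map_prod_pow_mul_reducedMonomial_pow {R S : Type*} [CommRing R] [CommRing S]
    (φ : R[X] →+* S) {a : ι → R} {w : ι → S}
    (hw : ∀ h, φ (X + C (a h)) * w h ^ ℓ = φ (C (a h))) (e : ι → Fin ℓ) :
    φ (∏ h, (X + C (a h)) ^ (e h : ℕ)) * reducedMonomial w e ^ ℓ =
      φ (C (∏ h, a h ^ (e h : ℕ))) := by
  simp only [reducedMonomial, map_prod, map_pow, ← prod_pow, ← prod_mul_distrib]
  refine prod_congr rfl fun h _ ↦ ?_
  rw [← hw, mul_pow, pow_right_comm]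

variable {K Ω : Type*} [Field K] [Algebra F[X] K] [IsFractionRing F[X] K] [Field Ω] [Algebra K Ω]
  [Algebra F[X] Ω] [IsScalarTower F[X] K Ω] {w : ι → Ω}

theorem eq_of_reducedMonomial_div_mem_range (ha : Function.Injective a) (ha0 : ∀ h, a h ≠ 0)
    (hw0 : ∀ h, w h ≠ 0)
    (hw : ∀ h, algebraMap F[X] Ω (X + C (a h)) * w h ^ ℓ = algebraMap F[X] Ω (C (a h)))
    {d e : ι → Fin ℓ}
    (hde : reducedMonomial w d / reducedMonomial w e ∈ Set.range (algebraMap K Ω)) : d = e := by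
  have hmon (e : ι → Fin ℓ) : reducedMonomial w e ≠ 0 :=
    prod_ne_zero_iff.2 fun h _ ↦ pow_ne_zero _ (hw0 h)
  have hconst (e : ι → Fin ℓ) : ∏ h, a h ^ (e h : ℕ) ≠ 0 :=
    prod_ne_zero_iff.2 fun h _ ↦ pow_ne_zero _ (ha0 h)
  have hφ : Function.Injective (algebraMap F[X] Ω) := by
    rw [IsScalarTower.algebraMap_eq F[X] K Ω]
    exact (algebraMap K Ω).injective.comp (IsFractionRing.injective F[X] K)
  obtain ⟨b, hb⟩ := hde
  obtain ⟨u, v, hv, rfl⟩ := IsFractionRing.div_surjective (A := F[X]) b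
  have hv0 : v ≠ 0 := nonZeroDivisors.ne_zero hv
  have hratio : algebraMap F[X] Ω v * reducedMonomial w d =
      algebraMap F[X] Ω u * reducedMonomial w e := by
    rw [map_div₀, ← IsScalarTower.algebraMap_apply, ← IsScalarTower.algebraMap_apply,
      div_eq_div_iff ((map_ne_zero_iff _ hφ).2 hv0) (hmon e)] at hb
    linear_combination -hb
  have hpoly : C (∏ h, a h ^ (d h : ℕ)) * v ^ ℓ * ∏ h, (X + C (a h)) ^ (e h : ℕ) =
      C (∏ h, a h ^ (e h : ℕ)) * u ^ ℓ * ∏ h, (X + C (a h)) ^ (d h : ℕ) := by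
    apply hφ
    simp only [map_mul _ (_ * _), map_mul _ (C _), map_pow,
      ← map_prod_pow_mul_reducedMonomial_pow _ hw]
    linear_combination (algebraMap F[X] Ω (∏ h, (X + C (a h)) ^ (d h : ℕ))) *
      (algebraMap F[X] Ω (∏ h, (X + C (a h)) ^ (e h : ℕ))) * congrArg (· ^ ℓ) hratio
  have hu0 : u ≠ 0 := by
    rintro rfl
    rw [map_zero, zero_mul, mul_eq_zero, map_eq_zero_iff _ hφ] at hratio
    exact hratio.elim hv0 (hmon d)
  funext i
  have hmult := congrArg (rootMultiplicity (-a i)) hpoly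
  rw [rootMultiplicity_C_mul_pow_mul_prod_X_add_C_pow ha (hconst d) hv0 (fun h ↦ (e h : ℕ)),
    rootMultiplicity_C_mul_pow_mul_prod_X_add_C_pow ha (hconst e) hu0 (fun h ↦ (d h : ℕ))] at hmult
  have hmod := congrArg (· % ℓ) hmult
  simp only [Nat.mul_add_mod, Nat.mod_eq_of_lt (Fin.is_lt _)] at hmod
  exact (Fin.ext hmod).symm

theorem linearIndependent_reducedMonomial [IsGalois K Ω] [NeZero ℓ] {ζ : F}
    (hζ : IsPrimitiveRoot ζ ℓ) (ha : Function.Injective a) (ha0 : ∀ h, a h ≠ 0)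
    (hw : ∀ h, algebraMap F[X] Ω (X + C (a h)) * w h ^ ℓ = algebraMap F[X] Ω (C (a h))) :
    LinearIndependent F[X] (reducedMonomial (ℓ := ℓ) w) := by
  have hφ : Function.Injective (algebraMap F[X] Ω) := by
    rw [IsScalarTower.algebraMap_eq F[X] K Ω]
    exact (algebraMap K Ω).injective.comp (IsFractionRing.injective F[X] K)
  have hw0 (h : ι) : w h ≠ 0 := by
    intro h0
    have := hw h
    rw [h0, zero_pow (NeZero.ne ℓ), mul_zero, eq_comm, map_eq_zero_iff _ hφ, C_eq_zero] at this
    exact ha0 h this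
  have hζK : IsPrimitiveRoot (algebraMap F[X] K (C ζ)) ℓ :=
    (hζ.map_of_injective C_injective).map_of_injective (IsFractionRing.injective F[X] K)
  rw [LinearIndependent.iff_fractionRing F[X] K]
  refine linearIndependent_of_pow_mem_range hζK
    (fun e ↦ prod_ne_zero_iff.2 fun h _ ↦ pow_ne_zero _ (hw0 h)) (fun e ↦ ?_)
    fun d e ↦ eq_of_reducedMonomial_div_mem_range ha ha0 hw0 hw
  have hden : algebraMap F[X] Ω (∏ h, (X + C (a h)) ^ (e h : ℕ)) ≠ 0 := (map_ne_zero_iff _ hφ).2 <|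
    prod_ne_zero_iff.2 fun h _ ↦ pow_ne_zero _ (X_add_C_ne_zero _)
  refine ⟨algebraMap F[X] K (C (∏ h, a h ^ (e h : ℕ))) /
    algebraMap F[X] K (∏ h, (X + C (a h)) ^ (e h : ℕ)), ?_⟩
  rw [map_div₀, ← IsScalarTower.algebraMap_apply, ← IsScalarTower.algebraMap_apply,
    div_eq_iff hden, ← map_prod_pow_mul_reducedMonomial_pow _ hw, mul_comm]

theorem det_monomialMulMatrix_ne_zero [NeZero ℓ] {ζ : F} (hζ : IsPrimitiveRoot ζ ℓ)
    [DecidableEq ι] (ha : Function.Injective a) (ha0 : ∀ h, a h ≠ 0) {f : (ι → Fin ℓ) → F[X]}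
    (hf : f ≠ 0) : (monomialMulMatrix a f).det ≠ 0 := by
  let K := FractionRing F[X]
  let Ω := SeparableClosure K
  have hφ : Function.Injective (algebraMap F[X] Ω) := by
    rw [IsScalarTower.algebraMap_eq F[X] K Ω]
    exact (algebraMap K Ω).injective.comp (IsFractionRing.injective F[X] K)
  have hshift (h : ι) : algebraMap F[X] Ω (X + C (a h)) ≠ 0 :=
    (map_ne_zero_iff _ hφ).2 (X_add_C_ne_zero _)
  have hℓ : NeZero (ℓ : Ω) := by
    have hζΩ := (hζ.map_of_injective C_injective).map_of_injective hφ
    exact hζΩ.neZero'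
  choose w hroot using fun h ↦ IsSepClosed.exists_pow_nat_eq
    (algebraMap F[X] Ω (C (a h)) / algebraMap F[X] Ω (X + C (a h))) ℓ
  have hw (h : ι) : algebraMap F[X] Ω (X + C (a h)) * w h ^ ℓ = algebraMap F[X] Ω (C (a h)) := by
    rw [hroot, mul_div_cancel₀ _ (hshift h)]
  refine det_monomialMulMatrix_ne_zero_of_linearIndependent ?_ hw
    (linearIndependent_reducedMonomial (K := K) hζ ha ha0 hw) hf
  rw [shiftProd, map_prod]
  exact prod_ne_zero_iff.2 fun h _ ↦ hshift h

theorem eq_zero_of_X_pow_dvd_sum_mul_reducedMonomial [NeZero ℓ] [DecidableEq ι] {ζ : F}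
    (hζ : IsPrimitiveRoot ζ ℓ) (ha : Function.Injective a) (ha0 : ∀ h, a h ≠ 0) {y : ι → F[X]}
    {N D : ℕ} (hy : ∀ h, X ^ N ∣ (X + C (a h)) * y h ^ ℓ - C (a h)) {f : (ι → Fin ℓ) → F[X]}
    (hf : ∀ e, (f e).natDegree ≤ D) (hdvd : X ^ N ∣ ∑ e, f e * reducedMonomial y e)
    (hN : ℓ ^ Fintype.card ι * (D + Fintype.card ι) < N) : f = 0 := by
  by_contra hf0
  let φ := Ideal.Quotient.mk (Ideal.span {(X ^ N : F[X])})
  have hφ (u : F[X]) : φ u = 0 ↔ X ^ N ∣ u := by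
    rw [Ideal.Quotient.eq_zero_iff_mem, Ideal.mem_span_singleton]
  have hw (h : ι) : φ (X + C (a h)) * φ (y h) ^ ℓ = φ (C (a h)) := by
    rw [← sub_eq_zero, ← map_pow, ← map_mul, ← map_sub, hφ]
    exact hy h
  have hmon (e : ι → Fin ℓ) : φ (reducedMonomial y e) = reducedMonomial (fun h ↦ φ (y h)) e := by
    simp [reducedMonomial]
  have hdet : X ^ N ∣ (monomialMulMatrix a f).det := by
    refine dvd_det_of_dvd_mulVec (v := reducedMonomial y) (i := 0) (fun e ↦ ?_)
      (by simp [reducedMonomial])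
    have hmul := congrFun (monomialMulMatrix_mulVec_reducedMonomial φ hw f) e
    simp only [← hmon, ← map_mul, ← map_sum, (hφ _).2 hdvd] at hmul
    rw [← hφ, RingHom.map_mulVec]
    simpa [Function.comp_def, hmon] using hmul
  refine det_monomialMulMatrix_ne_zero hζ ha ha0 hf0 (eq_zero_of_dvd_of_natDegree_lt hdet ?_)
  calc (monomialMulMatrix a f).det.natDegree
      ≤ Fintype.card (ι → Fin ℓ) * (D + Fintype.card ι) :=
        natDegree_det_le_card_mul (natDegree_monomialMulMatrix_le a hf)
    _ < (X ^ N : F[X]).natDegree := by simpa using hN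

end Radicals

section AuxiliaryPolynomials

theorem exists_ne_zero_of_sum_lt_card_mul {F κ τ : Type*} [Field F] [Fintype κ] [Fintype τ]
    (T : τ → (κ → F[X]) →ₗ[F] F[X]) {D : ℕ} {N : τ → ℕ}
    (hT : ∀ i f, (∀ k, f k ∈ degreeLT F D) → T i f ∈ degreeLT F (N i))
    (hN : ∑ i, N i < Fintype.card κ * D) :
    ∃ f ≠ 0, (∀ k, f k ∈ degreeLT F D) ∧ ∀ i, T i f = 0 := by
  have hfin (n : ℕ) : Module.Finite F (degreeLT F n) := .equiv (degreeLTEquiv F n).symm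
  have hrank (n : ℕ) : Module.finrank F (degreeLT F n) = n := by
    rw [(degreeLTEquiv F n).finrank_eq, Module.finrank_fin_fun]
  let incl : (κ → degreeLT F D) →ₗ[F] κ → F[X] := (degreeLT F D).subtype.compLeft κ
  let S : (κ → degreeLT F D) →ₗ[F] ∀ i, degreeLT F (N i) := LinearMap.pi fun i ↦
    ((T i).comp incl).codRestrict _ fun g ↦ hT i _ fun k ↦ (g k).2
  have hker : LinearMap.ker S ≠ ⊥ := LinearMap.ker_ne_bot_of_finrank_lt <| by
    simpa only [Module.finrank_pi_fintype, hrank, sum_const, card_univ, smul_eq_mul] using hN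
  obtain ⟨g, hg, hg0⟩ := (Submodule.ne_bot_iff _).1 hker
  refine ⟨incl g, fun h ↦ hg0 <| funext fun k ↦ Subtype.ext (congrFun h k), fun k ↦ (g k).2,
    fun i ↦ congrArg Subtype.val (congrFun hg i)⟩

theorem mul_card_le_natDegree_of_le_rootMultiplicity {R : Type*} [CommRing R] [IsDomain R]
    {Φ : R[X]} {A : Finset R} {M : ℕ} (hA : ∀ x ∈ A, M ≤ rootMultiplicity x Φ) :
    M * #A ≤ Φ.natDegree := by
  classical
  have hle : M • A.val ≤ Φ.roots := by
    refine Multiset.le_iff_count.2 fun x ↦ ?_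
    rw [Multiset.count_nsmul, count_roots]
    by_cases hx : x ∈ A
    · rw [Multiset.count_eq_one_of_mem A.nodup hx, mul_one]
      exact hA x hx
    · simp [Multiset.count_eq_zero_of_notMem hx]
  simpa using (Multiset.card_le_card hle).trans (card_roots' Φ)

theorem eq_zero_of_sum_pow_mul_eq_zero {R : Type*} [CommRing R] {x : R}
    (hx : x ∈ nonZeroDivisors R) {J : ℕ} {S : Fin J → R} (hS : ∀ j, x ∣ S j → S j = 0)
    (hsum : ∑ j : Fin J, x ^ (j : ℕ) * S j = 0) : S = 0 := by
  induction J with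
  | zero => exact Subsingleton.elim _ _
  | succ J ih =>
    have hsplit : S 0 + x * ∑ j : Fin J, x ^ (j : ℕ) * S j.succ = 0 := by
      simpa [Fin.sum_univ_succ, mul_sum, pow_succ', mul_assoc] using hsum
    have hzero : S 0 = 0 :=
      hS 0 ⟨_, (eq_neg_of_add_eq_zero_left hsplit).trans (mul_neg _ _).symm⟩
    rw [hzero, zero_add, mul_comm] at hsplit
    have htail := ih (fun j ↦ hS j.succ) ((mem_nonZeroDivisors_iff_right.1 hx) _ hsplit)
    exact funext (Fin.cases hzero (congrFun htail))

end AuxiliaryPolynomials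

section TwistedDerivative

variable {R : Type*} [CommRing R]

/-- If `Q * Y' = c * Y`, then `twistedDeriv Q c i g` is the polynomial factor of the `i`-th
derivative of `g * Y`, after clearing denominators: `Q ^ i * (g * Y)⁽ⁱ⁾ = twistedDeriv Q c i g * Y`.
This lets one differentiate high powers such as `Y` while keeping degrees small. -/
noncomputable def twistedDeriv (Q c : R[X]) : ℕ → R[X] →ₗ[R] R[X]
  | 0 => LinearMap.id
  | i + 1 => (LinearMap.mulLeft R Q ∘ₗ derivative +
      LinearMap.mulLeft R (c - (i : R[X]) * derivative Q)) ∘ₗ twistedDeriv Q c i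

theorem twistedDeriv_succ_apply (Q c : R[X]) (i : ℕ) (g : R[X]) :
    twistedDeriv Q c (i + 1) g = Q * derivative (twistedDeriv Q c i g) +
      (c - (i : R[X]) * derivative Q) * twistedDeriv Q c i g := rfl

theorem pow_mul_iterate_derivative_eq_twistedDeriv {Q c Y t : R[X]}
    (hY : Q * derivative Y = c * Y) (ht : derivative t = 0) (g : R[X]) (i : ℕ) :
    Q ^ i * derivative^[i] (g * t * Y) = twistedDeriv Q c i g * t * Y := by
  induction i with
  | zero => simp [twistedDeriv]
  | succ i ih =>
    have hQ : Q * derivative (Q ^ i) = (i : R[X]) * derivative Q * Q ^ i := by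
      cases i with
      | zero => simp
      | succ i => rw [derivative_pow_succ, map_add, map_natCast, map_one]; push_cast; ring
    have hder := congrArg derivative ih
    simp only [derivative_mul, ht] at hder
    rw [Function.iterate_succ_apply', twistedDeriv_succ_apply]
    linear_combination Q * hder + twistedDeriv Q c i g * t * hY - (i : R[X]) * derivative Q * ih -
      derivative^[i] (g * t * Y) * hQ

theorem mul_mem_degreeLT {f g : R[X]} {k n : ℕ} (hf : f.natDegree ≤ n) (hg : g ∈ degreeLT R k) :
    f * g ∈ degreeLT R (k + n) := by
  rw [mem_degreeLT] at hg ⊢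
  calc (f * g).degree ≤ f.degree + g.degree := degree_mul_le f g
    _ ≤ n + g.degree := by gcongr; exact degree_le_of_natDegree_le hf
    _ < n + k := WithBot.add_lt_add_left (WithBot.natCast_ne_bot n) hg
    _ = ↑(k + n) := by rw [add_comm, Nat.cast_add]

theorem twistedDeriv_mem_degreeLT {Q c : R[X]} {n k : ℕ} (hQ : Q.natDegree ≤ n)
    (hc : c.natDegree ≤ n) {g : R[X]} (hg : g ∈ degreeLT R k) (i : ℕ) :
    twistedDeriv Q c i g ∈ degreeLT R (k + i * n) := by
  induction i with
  | zero => simpa [twistedDeriv] using hg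
  | succ i ih =>
    have hcoef : (c - (i : R[X]) * derivative Q).natDegree ≤ n :=
      (natDegree_sub_le _ _).trans <| max_le hc <| natDegree_mul_le.trans <| by
        rw [natDegree_natCast, zero_add]
        exact (natDegree_derivative_le _).trans (by omega)
    rw [twistedDeriv_succ_apply, add_one_mul, ← add_assoc]
    refine add_mem (mul_mem_degreeLT hQ ?_) (mul_mem_degreeLT hcoef ih)
    rw [mem_degreeLT] at ih ⊢
    exact degree_derivative_le.trans_lt ih

end TwistedDerivative

section Stepanov

variable {ι F : Type*} [Fintype ι] [Field F] {ℓ m J : ℕ} {a : ι → F}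

/-- The logarithmic derivative of `∏ h, (X + a h) ^ k h`, multiplied by the common denominator
`shiftProd a`. -/
noncomputable def shiftLogDeriv [DecidableEq ι] (a : ι → F) (k : ι → ℕ) : F[X] :=
  ∑ h, (k h : F[X]) * ∏ h' ∈ univ.erase h, (X + C (a h'))

theorem shiftProd_mul_derivative_prod_pow [DecidableEq ι] (a : ι → F) (k : ι → ℕ) :
    shiftProd a * derivative (∏ h, (X + C (a h)) ^ k h) =
      shiftLogDeriv a k * ∏ h, (X + C (a h)) ^ k h := by
  rw [derivative_prod_finset, mul_sum, shiftLogDeriv, sum_mul]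
  refine sum_congr rfl fun h _ ↦ ?_
  have hfactor : (X + C (a h)) * derivative ((X + C (a h)) ^ k h) =
      (k h : F[X]) * (X + C (a h)) ^ k h := by
    cases k h with
    | zero => simp
    | succ n => rw [derivative_pow_succ]; simp; ring
  rw [shiftProd, ← mul_prod_erase _ _ (mem_univ h), ← mul_prod_erase _ _ (mem_univ h)]
  linear_combination (∏ h' ∈ univ.erase h, (X + C (a h'))) *
    (∏ h' ∈ univ.erase h, (X + C (a h')) ^ k h') * hfactor

theorem natDegree_shiftProd_le (a : ι → F) : (shiftProd a).natDegree ≤ Fintype.card ι :=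
  (natDegree_prod_le _ _).trans (by simp)

theorem natDegree_shiftLogDeriv_le [DecidableEq ι] (a : ι → F) (k : ι → ℕ) :
    (shiftLogDeriv a k).natDegree ≤ Fintype.card ι := by
  refine natDegree_sum_le_of_forall_le _ _ fun h _ ↦ natDegree_mul_le.trans ?_
  rw [natDegree_natCast, zero_add]
  exact (natDegree_prod_le _ _).trans (by simp)

/-- The monomials `∏ h, (X + a h) ^ (m * e h)` in the powers `(X + a h) ^ m`. If `ℓ * m = q - 1`
in the field with `q` elements, these powers are approximations modulo `X ^ q` to the radicals
`(a h / (X + a h)) ^ (1 / ℓ)`. -/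
noncomputable def shiftMonomial (a : ι → F) (m : ℕ) (e : ι → Fin ℓ) : F[X] :=
  reducedMonomial (fun h ↦ (X + C (a h)) ^ m) e

theorem shiftMonomial_eq_prod (a : ι → F) (m : ℕ) (e : ι → Fin ℓ) :
    shiftMonomial a m e = ∏ h, (X + C (a h)) ^ (m * e h) :=
  prod_congr rfl fun _ _ ↦ (pow_mul _ _ _).symm

theorem natDegree_shiftMonomial_le (a : ι → F) (e : ι → Fin ℓ) :
    (shiftMonomial a m e).natDegree ≤ ℓ * m * Fintype.card ι := by
  rw [shiftMonomial_eq_prod]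
  refine (natDegree_prod_le _ _).trans <|
    (sum_le_card_nsmul _ _ (ℓ * m) fun h _ ↦ ?_).trans_eq (by simp [mul_comm])
  rw [natDegree_pow, natDegree_X_add_C, mul_one, mul_comm]
  exact Nat.mul_le_mul_right m (e h).is_le'

theorem eval_shiftMonomial {x : F} (hx : ∀ h, (x + a h) ^ m = 1) (e : ι → Fin ℓ) :
    (shiftMonomial a m e).eval x = 1 := by
  simp [shiftMonomial, reducedMonomial, eval_prod, hx]

variable [DecidableEq ι]

/-- The polynomial which takes at every `x` with `(x + a h) ^ m = 1` for all `h` the same value as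
`shiftProd a ^ i` times the `i`-th derivative of `stepanovPoly a m f`, obtained by reducing
`x ^ q` to `x` and the monomials `shiftMonomial a m e` to `1`. -/
noncomputable def stepanovReduction (a : ι → F) (m i : ℕ) :
    ((ι → Fin ℓ) × Fin J → F[X]) →ₗ[F] F[X] :=
  ∑ s, LinearMap.mulRight F (X ^ (s.2 : ℕ)) ∘ₗ
    twistedDeriv (shiftProd a) (shiftLogDeriv a fun h ↦ m * s.1 h) i ∘ₗ LinearMap.proj s

theorem stepanovReduction_mem_degreeLT {f : (ι → Fin ℓ) × Fin J → F[X]} {D : ℕ}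
    (hf : ∀ s, f s ∈ degreeLT F D) (i : ℕ) :
    stepanovReduction a m i f ∈ degreeLT F (D + i * Fintype.card ι + J) := by
  rw [stepanovReduction, LinearMap.sum_apply]
  refine sum_mem fun s _ ↦ ?_
  rw [LinearMap.comp_apply, LinearMap.mulRight_apply, mul_comm _ (X ^ _),
    LinearMap.comp_apply, LinearMap.proj_apply]
  exact mul_mem_degreeLT ((natDegree_X_pow_le _).trans s.2.is_le')
    (twistedDeriv_mem_degreeLT (natDegree_shiftProd_le a) (natDegree_shiftLogDeriv_le a _) (hf s) i)

variable [Fintype F]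

/-- Stepanov's auxiliary polynomial with coefficient polynomials `f (e, j)`. -/
noncomputable def stepanovPoly (a : ι → F) (m : ℕ) (f : (ι → Fin ℓ) × Fin J → F[X]) : F[X] :=
  ∑ s, f s * X ^ (Fintype.card F * s.2) * shiftMonomial a m s.1

theorem X_pow_card_dvd_shift_mul_pow_sub (hm : ℓ * m = Fintype.card F - 1) (b : F) :
    X ^ Fintype.card F ∣ (X + C b) * ((X + C b) ^ m) ^ ℓ - C b := by
  have hfrob : (X + C b) ^ Fintype.card F = X ^ Fintype.card F + C b := by
    rw [← FiniteField.expand_card, map_add, expand_X, expand_C]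
  rw [← pow_mul, ← pow_succ', mul_comm m, hm, Nat.sub_add_cancel Fintype.card_pos, hfrob,
    add_sub_cancel_right]

theorem exists_isPrimitiveRoot_of_mul_eq_card_sub_one (hm : ℓ * m = Fintype.card F - 1) :
    ∃ ζ : F, IsPrimitiveRoot ζ ℓ := by
  classical
  obtain ⟨g, hg⟩ := IsCyclic.exists_ofOrder_eq_natCard (α := Fˣ)
  rw [Nat.card_eq_fintype_card, Fintype.card_units, ← hm, mul_comm] at hg
  have hpos : 0 < orderOf g := orderOf_pos g
  exact ⟨_, IsPrimitiveRoot.coe_units_iff.2 ((IsPrimitiveRoot.orderOf g).pow hpos hg)⟩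

theorem stepanovPoly_ne_zero (hm : ℓ * m = Fintype.card F - 1) (ha : Function.Injective a)
    (ha0 : ∀ h, a h ≠ 0) {D : ℕ}
    (hD : ℓ ^ Fintype.card ι * (D + Fintype.card ι) < Fintype.card F)
    {f : (ι → Fin ℓ) × Fin J → F[X]} (hf : ∀ s, (f s).natDegree ≤ D) (hf0 : f ≠ 0) :
    stepanovPoly a m f ≠ 0 := by
  obtain ⟨ζ, hζ⟩ := exists_isPrimitiveRoot_of_mul_eq_card_sub_one hm
  have hℓ : NeZero ℓ := ⟨by rintro rfl; have := Fintype.one_lt_card (α := F); omega⟩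
  have hblock (j : Fin J) (hj : X ^ Fintype.card F ∣ ∑ e, f (e, j) * shiftMonomial a m e) :
      (fun e ↦ f (e, j)) = 0 :=
    eq_zero_of_X_pow_dvd_sum_mul_reducedMonomial hζ ha ha0
      (fun h ↦ X_pow_card_dvd_shift_mul_pow_sub hm (a h)) (fun e ↦ hf (e, j)) hj hD
  intro hzero
  have hsum : ∑ j : Fin J, (X ^ Fintype.card F) ^ (j : ℕ) *
      ∑ e, f (e, j) * shiftMonomial a m e = 0 := by
    rw [← hzero, stepanovPoly, Fintype.sum_prod_type_right]
    refine sum_congr rfl fun j _ ↦ (mul_sum _ _ _).trans <| sum_congr rfl fun e _ ↦ ?_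
    rw [pow_mul]
    ring
  have hzeros := eq_zero_of_sum_pow_mul_eq_zero
    (mem_nonZeroDivisors_of_ne_zero (pow_ne_zero _ X_ne_zero))
    (fun j hj ↦ sum_eq_zero fun e _ ↦ by rw [congrFun (hblock j hj) e, Pi.zero_apply, zero_mul])
    hsum
  refine hf0 (funext fun s ↦ congrFun (hblock s.2 ?_) s.1)
  rw [congrFun hzeros s.2]
  exact dvd_zero _

theorem natDegree_stepanovPoly_le (hm : ℓ * m ≤ Fintype.card F)
    {f : (ι → Fin ℓ) × Fin J → F[X]} (hf : ∀ s, (f s).natDegree ≤ Fintype.card F) :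
    (stepanovPoly a m f).natDegree ≤ Fintype.card F * (J + Fintype.card ι) := by
  refine natDegree_sum_le_of_forall_le _ _ fun s _ ↦ ?_
  have hj : (s.2 : ℕ) + 1 ≤ J := s.2.is_lt
  calc (f s * X ^ (Fintype.card F * s.2) * shiftMonomial a m s.1).natDegree
      ≤ (f s).natDegree + (X ^ (Fintype.card F * s.2) : F[X]).natDegree +
          (shiftMonomial a m s.1).natDegree :=
        natDegree_mul_le.trans (Nat.add_le_add_right natDegree_mul_le _)
    _ ≤ Fintype.card F + Fintype.card F * s.2 + Fintype.card F * Fintype.card ι := by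
        gcongr
        · exact hf s
        · exact natDegree_X_pow_le _
        · exact (natDegree_shiftMonomial_le a s.1).trans (Nat.mul_le_mul_right _ hm)
    _ = Fintype.card F * ((s.2 + 1) + Fintype.card ι) := by ring
    _ ≤ Fintype.card F * (J + Fintype.card ι) := by gcongr

theorem shiftProd_pow_mul_iterate_derivative_stepanovPoly (f : (ι → Fin ℓ) × Fin J → F[X])
    (i : ℕ) : shiftProd a ^ i * derivative^[i] (stepanovPoly a m f) =
      ∑ s, twistedDeriv (shiftProd a) (shiftLogDeriv a fun h ↦ m * s.1 h) i (f s) *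
        X ^ (Fintype.card F * s.2) * shiftMonomial a m s.1 := by
  rw [stepanovPoly, iterate_derivative_sum, mul_sum]
  refine sum_congr rfl fun s _ ↦ ?_
  have hX : derivative (X ^ (Fintype.card F * s.2) : F[X]) = 0 := by
    simp [derivative_X_pow]
  rw [shiftMonomial_eq_prod]
  exact pow_mul_iterate_derivative_eq_twistedDeriv (shiftProd_mul_derivative_prod_pow a _) hX _ _

theorem eval_shiftProd_pow_mul_iterate_derivative_stepanovPoly {x : F}
    (hx : ∀ h, (x + a h) ^ m = 1) (f : (ι → Fin ℓ) × Fin J → F[X]) (i : ℕ) :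
    (shiftProd a ^ i * derivative^[i] (stepanovPoly a m f)).eval x =
      (stepanovReduction a m i f).eval x := by
  rw [shiftProd_pow_mul_iterate_derivative_stepanovPoly]
  simp [stepanovReduction, eval_finsetSum, eval_shiftMonomial hx, pow_mul, FiniteField.pow_card]

theorem le_rootMultiplicity_stepanovPoly {f : (ι → Fin ℓ) × Fin J → F[X]}
    (hf : stepanovPoly a m f ≠ 0) {M : ℕ} (hM : M ≤ ringChar F)
    (hred : ∀ i < M, stepanovReduction a m i f = 0) {x : F} (hm : m ≠ 0)
    (hx : ∀ h, (x + a h) ^ m = 1) : M ≤ rootMultiplicity x (stepanovPoly a m f) := by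
  obtain _ | M := M
  · exact Nat.zero_le _
  have hprime : (ringChar F).Prime := CharP.char_is_prime F _
  have hfact : (M.factorial : F) ≠ 0 := by
    rw [Ne, ringChar.spec, hprime.dvd_factorial]
    omega
  have hshift : (shiftProd a).eval x ≠ 0 := by
    simp only [shiftProd, eval_prod, eval_add, eval_X, eval_C, prod_ne_zero_iff]
    intro h _ h0
    exact zero_ne_one ((zero_pow hm).symm.trans (h0 ▸ hx h))
  refine (lt_rootMultiplicity_iff_isRoot_iterate_derivative_of_mem_nonZeroDivisors hf
    (mem_nonZeroDivisors_of_ne_zero hfact)).2 fun i hi ↦ ?_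
  have heval := eval_shiftProd_pow_mul_iterate_derivative_stepanovPoly hx f i
  rw [hred i (Nat.lt_succ_of_le hi), eval_zero, eval_mul, eval_pow] at heval
  exact (mul_eq_zero.1 heval).resolve_left (pow_ne_zero _ hshift)

end Stepanov

theorem mul_card_le_of_forall_shift_pow_eq_one {ι F : Type*} [Fintype ι] [Field F] [Fintype F]
    {ℓ m : ℕ} {a : ι → F} (hm : ℓ * m = Fintype.card F - 1)
    (ha : Function.Injective a) (ha0 : ∀ h, a h ≠ 0) {D M : ℕ} (J : ℕ)
    (hD : ℓ ^ Fintype.card ι * (D + Fintype.card ι) < Fintype.card F) (hM : M ≤ ringChar F)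
    (hcount : ∑ i ∈ range M, (D + i * Fintype.card ι + J) < ℓ ^ Fintype.card ι * J * D)
    {A : Finset F} (hA : ∀ x ∈ A, ∀ h, (x + a h) ^ m = 1) :
    M * #A ≤ Fintype.card F * (J + Fintype.card ι) := by
  classical
  obtain ⟨f, hf0, hfD, hred⟩ := exists_ne_zero_of_sum_lt_card_mul
    (fun i : Fin M ↦ stepanovReduction (ℓ := ℓ) (J := J) a m i)
    (fun i f hf ↦ stepanovReduction_mem_degreeLT hf i)
    (by simpa [sum_range] using hcount)
  have hℓm : 0 < ℓ * m := hm ▸ Nat.sub_pos_of_lt Fintype.one_lt_card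
  have hfD' (s) : (f s).natDegree ≤ D := natDegree_le_of_degree_le (mem_degreeLT.1 (hfD s)).le
  have hDq : D ≤ Fintype.card F := by
    have := Nat.pow_pos (n := Fintype.card ι) (Nat.pos_of_mul_pos_right hℓm)
    nlinarith
  have hne := stepanovPoly_ne_zero hm ha ha0 hD hfD' hf0
  calc M * #A ≤ (stepanovPoly a m f).natDegree :=
        mul_card_le_natDegree_of_le_rootMultiplicity fun x hx ↦
          le_rootMultiplicity_stepanovPoly hne hM (fun i hi ↦ hred ⟨i, hi⟩)
            (Nat.pos_of_mul_pos_left hℓm).ne' (hA x hx)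
    _ ≤ Fintype.card F * (J + Fintype.card ι) :=
        natDegree_stepanovPoly_le (hm.trans_le (Nat.sub_le _ _)) fun s ↦ (hfD' s).trans hDq

section FareyShifts

variable {p B H : ℕ}

/-- Triples `(q, a, i)` consisting of a reduced fraction `a / q` in `[0, 1)` of small denominator
and a shift `i` for which the `H` integers following `⌊a * p / q⌋ + i` are all at distance at most
`B / q` from `a * p / q`. -/
def fareyTriples (B H : ℕ) : Finset (Σ _ : ℕ, ℕ × ℕ) :=
  (Ioc 0 (B / (2 * H))).sigma fun q ↦ {a ∈ range q | q.Coprime a} ×ˢ range (B / q + 1 - H)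

/-- The integer `⌊a * p / q⌋ + i` attached to the triple `(q, a, i)`. -/
def fareyShift (p : ℕ) (t : Σ _ : ℕ, ℕ × ℕ) : ℕ := t.2.1 * p / t.1 + t.2.2

theorem mem_fareyTriples {t : Σ _ : ℕ, ℕ × ℕ} : t ∈ fareyTriples B H ↔
    (0 < t.1 ∧ t.1 ≤ B / (2 * H)) ∧ (t.2.1 < t.1 ∧ t.1.Coprime t.2.1) ∧
      t.2.2 < B / t.1 + 1 - H := by
  simp [fareyTriples]

theorem exists_mul_div_add_eq_add (n : ℕ) {q j : ℕ} (hq : 0 < q) (hj : 0 < j) (hjB : q * j ≤ B) :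
    ∃ N ∈ Icc 1 B, q * (n / q + j) = n + N := by
  have hdiv := Nat.div_add_mod n q
  have hmod := Nat.mod_lt n hq
  have hqj := Nat.le_mul_of_pos_right q hj
  refine ⟨q * j - n % q, mem_Icc.2 ⟨by omega, by omega⟩, ?_⟩
  rw [mul_add]
  omega

theorem exists_mul_fareyShift_add_eq {t : Σ _ : ℕ, ℕ × ℕ} (ht : t ∈ fareyTriples B H) {h : ℕ}
    (hh : h ∈ Icc 1 H) :
    ∃ N ∈ Icc 1 B, t.1 * (fareyShift p t + h) = t.2.1 * p + N := by
  obtain ⟨⟨hq, -⟩, -, hi⟩ := mem_fareyTriples.1 ht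
  obtain ⟨hh1, hhH⟩ := mem_Icc.1 hh
  simp only [fareyShift, add_assoc]
  refine exists_mul_div_add_eq_add _ hq (by omega) ?_
  calc t.1 * (t.2.2 + h) ≤ t.1 * (B / t.1) := Nat.mul_le_mul_left _ (by omega)
    _ ≤ B := Nat.mul_div_le B t.1

theorem eq_and_eq_of_mul_eq_mul_add (hBp : B ^ 2 < p) {q q' a a' N N' y : ℕ} (hq0 : 0 < q)
    (hq : q ≤ B) (hq' : q' ≤ B) (hN : N ≤ B) (hN' : N' ≤ B) (ha : q.Coprime a)
    (ha' : q'.Coprime a') (hy : q * y = a * p + N) (hy' : q' * y = a' * p + N') :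
    q = q' ∧ a = a' := by
  have hcross : (a * q' : ℤ) = a' * q := by
    have hdiff : (p : ℤ) * (a' * q - a * q') = q' * N - q * N' := by
      zify at hy hy'
      linear_combination q' * hy - q * hy'
    have hsmall : |(q' * N - q * N' : ℤ)| < p := by
      have hqN : q' * N ≤ B ^ 2 := sq B ▸ Nat.mul_le_mul hq' hN
      have hqN' : q * N' ≤ B ^ 2 := sq B ▸ Nat.mul_le_mul hq hN'
      zify at hBp hqN hqN'
      rw [abs_lt]
      constructor <;> nlinarith
    have hzero := Int.eq_zero_of_abs_lt_dvd (Dvd.intro _ hdiff) hsmall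
    have hp : (p : ℤ) ≠ 0 := by omega
    rw [hzero, mul_eq_zero, or_iff_right hp] at hdiff
    linarith
  norm_cast at hcross
  have hqq' : q = q' := Nat.dvd_antisymm
    (ha.dvd_of_dvd_mul_left (Dvd.intro_left _ hcross.symm))
    (ha'.dvd_of_dvd_mul_left (Dvd.intro_left _ hcross))
  subst hqq'
  exact ⟨rfl, Nat.eq_of_mul_eq_mul_right hq0 hcross⟩

theorem fareyShift_lt (hBp : B ≤ p) (hH : 0 < H) {t : Σ _ : ℕ, ℕ × ℕ} (ht : t ∈ fareyTriples B H) :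
    fareyShift p t < p := by
  obtain ⟨N, hN, hshift⟩ := exists_mul_fareyShift_add_eq (p := p) ht (mem_Icc.2 ⟨le_rfl, hH⟩)
  obtain ⟨⟨hq, -⟩, ⟨haq, -⟩, -⟩ := mem_fareyTriples.1 ht
  have hNp := (mem_Icc.1 hN).2.trans hBp
  refine Nat.lt_of_succ_le (Nat.le_of_mul_le_mul_left ?_ hq)
  calc t.1 * (fareyShift p t + 1) ≤ t.2.1 * p + p := by omega
    _ ≤ t.1 * p := by nlinarith

theorem fareyShift_injOn (hBp : B ^ 2 < p) (hH : 0 < H) :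
    Set.InjOn (fareyShift p) (fareyTriples B H : Set (Σ _ : ℕ, ℕ × ℕ)) := by
  rintro ⟨q, a, i⟩ ht ⟨q', a', i'⟩ ht' heq
  obtain ⟨N, hN, hy⟩ := exists_mul_fareyShift_add_eq (p := p) ht (mem_Icc.2 ⟨le_rfl, hH⟩)
  obtain ⟨N', hN', hy'⟩ := exists_mul_fareyShift_add_eq (p := p) ht' (mem_Icc.2 ⟨le_rfl, hH⟩)
  obtain ⟨⟨hq, hqB⟩, ⟨-, ha⟩, -⟩ := mem_fareyTriples.1 ht
  obtain ⟨⟨-, hqB'⟩, ⟨-, ha'⟩, -⟩ := mem_fareyTriples.1 ht'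
  rw [← heq] at hy'
  obtain ⟨rfl, rfl⟩ := eq_and_eq_of_mul_eq_mul_add hBp hq (hqB.trans (Nat.div_le_self _ _))
    (hqB'.trans (Nat.div_le_self _ _)) (mem_Icc.1 hN).2 (mem_Icc.1 hN').2 ha ha' hy hy'
  obtain rfl : i = i' := Nat.add_left_cancel heq
  rfl

theorem two_mul_sum_totient_mul_div (X : ℕ) :
    2 * ∑ q ∈ Ioc 0 X, q.totient * (X / q) = X * (X + 1) := by
  let φ : ArithmeticFunction ℕ := ⟨Nat.totient, Nat.totient_zero⟩
  have hφ (n : ℕ) : (φ * ArithmeticFunction.zeta) n = n := by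
    rw [ArithmeticFunction.mul_zeta_apply]
    exact Nat.sum_totient n
  calc 2 * ∑ q ∈ Ioc 0 X, q.totient * (X / q) = 2 * ∑ n ∈ Ioc 0 X, n := by
        simpa [hφ, φ] using (ArithmeticFunction.sum_Ioc_mul_zeta_eq_sum φ X).symm
    _ = (∑ n ∈ range (X + 1), n) * 2 := by
        rw [mul_comm, range_eq_Ico, sum_eq_sum_Ico_succ_bot X.succ_pos, zero_add]
        rfl
    _ = X * (X + 1) := by rw [sum_range_id_mul_two, Nat.add_sub_cancel, mul_comm]

theorem mul_div_le_two_mul_mul_sub {q : ℕ} (hq : 0 < q) (hqB : q ≤ B / (2 * H)) :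
    B * (B / (2 * H) / q) ≤ 2 * (B / (2 * H)) * (B / q + 1 - H) := by
  set X := B / (2 * H)
  have hBq : B ≤ 2 * (q * (B / q + 1 - H)) := by
    have hlt : B < q * (B / q + 1) := Nat.lt_mul_div_succ B hq
    have hle : 2 * (q * H) ≤ B := by
      calc 2 * (q * H) = 2 * H * q := by ring
        _ ≤ 2 * H * X := Nat.mul_le_mul_left _ hqB
        _ ≤ B := Nat.mul_div_le B (2 * H)
    rw [Nat.mul_sub]
    omega
  calc B * (X / q) ≤ 2 * (q * (B / q + 1 - H)) * (X / q) := Nat.mul_le_mul_right _ hBq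
    _ = 2 * (q * (X / q)) * (B / q + 1 - H) := by ring
    _ ≤ 2 * X * (B / q + 1 - H) := by gcongr; exact Nat.mul_div_le X q

theorem sq_le_mul_card_fareyTriples (hH : 0 < H) (hHB : 2 * H ≤ B) :
    B ^ 2 ≤ 8 * H * #(fareyTriples B H) := by
  set X := B / (2 * H) with hX
  have hX0 : 0 < X := Nat.div_pos hHB (by omega)
  have hcard : #(fareyTriples B H) = ∑ q ∈ Ioc 0 X, q.totient * (B / q + 1 - H) := by
    simp only [fareyTriples, card_sigma, card_product, card_range, Nat.totient, ← hX]
  have hsum : B * (X * (X + 1)) ≤ 4 * X * #(fareyTriples B H) := by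
    calc B * (X * (X + 1)) = 2 * ∑ q ∈ Ioc 0 X, q.totient * (B * (X / q)) := by
          rw [← two_mul_sum_totient_mul_div, mul_left_comm, mul_sum]
          simp only [mul_left_comm]
      _ ≤ 2 * ∑ q ∈ Ioc 0 X, q.totient * (2 * X * (B / q + 1 - H)) := by
          refine Nat.mul_le_mul_left _ (sum_le_sum fun q hq ↦ Nat.mul_le_mul_left _ ?_)
          exact mul_div_le_two_mul_mul_sub (mem_Ioc.1 hq).1 (mem_Ioc.1 hq).2
      _ = 4 * X * #(fareyTriples B H) := by
          rw [hcard, mul_sum, mul_sum]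
          exact sum_congr rfl fun q _ ↦ by ring
  have hBX : B ≤ 2 * H * (X + 1) := (Nat.lt_mul_div_succ B (by omega)).le
  calc B ^ 2 ≤ B * (2 * H * (X + 1)) := by rw [sq]; gcongr
    _ = 2 * H * (B * (X + 1)) := by ring
    _ ≤ 2 * H * (4 * #(fareyTriples B H)) := by
        exact Nat.mul_le_mul_left _ (Nat.le_of_mul_le_mul_left (by linarith) hX0)
    _ = 8 * H * #(fareyTriples B H) := by ring

theorem exists_finset_forall_add_pow_eq_one {m : ℕ} (hH : 0 < H) (hHB : 2 * H ≤ B)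
    (hBp : B ^ 2 < p) (hpow : ∀ N ∈ Icc 1 B, (N : ZMod p) ^ m = 1) :
    ∃ A : Finset (ZMod p),
      (∀ x ∈ A, ∀ h ∈ Icc 1 H, (x + (h : ℕ)) ^ m = 1) ∧ B ^ 2 ≤ 8 * H * #A := by
  have hBp' : B ≤ p := (Nat.le_self_pow two_ne_zero B).trans hBp.le
  refine ⟨(fareyTriples B H).image fun t ↦ (fareyShift p t : ZMod p), ?_, ?_⟩
  · simp only [forall_mem_image]
    intro t ht h hh
    obtain ⟨⟨hq, hqB⟩, -⟩ := mem_fareyTriples.1 ht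
    obtain ⟨N, hN, hshift⟩ := exists_mul_fareyShift_add_eq (p := p) ht hh
    have hcast : (t.1 : ZMod p) * (fareyShift p t + h) = N := by
      simpa using congrArg (Nat.cast (R := ZMod p)) hshift
    have hq1 := hpow t.1 (mem_Icc.2 ⟨hq, hqB.trans (Nat.div_le_self _ _)⟩)
    rw [← hpow N hN, ← hcast, mul_pow, hq1, one_mul]
  · rw [card_image_of_injOn]
    · exact sq_le_mul_card_fareyTriples hH hHB
    · intro t ht t' ht' heq
      refine fareyShift_injOn hBp hH ht ht' ?_
      rwa [ZMod.natCast_eq_natCast_iff', Nat.mod_eq_of_lt (fareyShift_lt hBp' hH ht),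
        Nat.mod_eq_of_lt (fareyShift_lt hBp' hH ht')] at heq

end FareyShifts

section LeastPrimeNonresidue

variable {p q : ℕ} {R : Type*} [CommMonoidWithZero R] {χ : DirichletCharacter R p}

/-- `q` is the least prime non-residue of the Dirichlet character `χ`, that is, the least prime at
which `χ` takes a value other than `0` and `1`. -/
def IsLeastPrimeNonresidue (χ : DirichletCharacter R p) (q : ℕ) : Prop :=
  IsLeast {r : ℕ | r.Prime ∧ χ (r : ZMod p) ∉ ({0, 1} : Set R)} q

theorem map_natCast_eq_one_of_forall_prime_dvd {N : ℕ} (hN : N ≠ 0)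
    (h : ∀ q : ℕ, q.Prime → q ∣ N → χ (q : ZMod p) = 1) : χ (N : ZMod p) = 1 := by
  rw [← Nat.prod_primeFactorsList hN, Nat.cast_list_prod, map_list_prod]
  refine List.prod_eq_one ?_
  simp only [List.mem_map, forall_exists_index, and_imp, forall_apply_eq_imp_iff₂]
  exact fun q hq ↦ h q (Nat.prime_of_mem_primeFactorsList hq) (Nat.dvd_of_mem_primeFactorsList hq)

variable [Fact p.Prime]

namespace IsLeastPrimeNonresidue

theorem map_natCast_eq_one (h : IsLeastPrimeNonresidue χ q) {N : ℕ} (hN : N ≠ 0) (hNq : N < q)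
    (hNp : N < p) : χ (N : ZMod p) = 1 := by
  refine map_natCast_eq_one_of_forall_prime_dvd hN fun r hr hrN ↦ ?_
  have hrle : r ≤ N := Nat.le_of_dvd hN.bot_lt hrN
  have hmem : χ (r : ZMod p) ∈ ({0, 1} : Set R) := by
    by_contra hmem
    exact (hrle.trans_lt hNq).not_ge (h.2 ⟨hr, hmem⟩)
  have hunit : IsUnit (χ (r : ZMod p)) := ((ZMod.isUnit_iff_coprime r p).2
    (Nat.coprime_of_lt_prime hr.ne_zero (hrle.trans_lt hNp) Fact.out).symm).map χ
  rcases hmem with hzero | hone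
  · rw [hzero] at hunit ⊢
    exact isUnit_zero_iff.1 hunit
  · exact hone

theorem lt_modulus (h : IsLeastPrimeNonresidue χ q) : q < p := by
  by_contra! hle
  apply h.1.2
  have hmod := Nat.mod_lt q (Fact.out : p.Prime).pos
  rw [← ZMod.natCast_mod]
  by_cases hzero : q % p = 0
  · rw [hzero, Nat.cast_zero]
    exact Or.inl (MulChar.map_nonunit χ not_isUnit_zero)
  · exact Or.inr (h.map_natCast_eq_one hzero (hmod.trans_le hle) hmod)

theorem le_div_add_one (h : IsLeastPrimeNonresidue χ q) : q ≤ p / q + 1 := by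
  by_contra! hlt
  have hqp := h.lt_modulus
  have hq : q.Prime := h.1.1
  have hmod : p % q ≠ 0 := fun hmod ↦ hqp.ne
    ((Nat.prime_dvd_prime_iff_eq hq Fact.out).1 (Nat.dvd_of_mod_eq_zero hmod))
  have hmodlt := Nat.mod_lt p hq.pos
  have hmul : (p / q + 1) * q = p + (q - p % q) := by
    have := Nat.div_add_mod' p q
    rw [add_mul]
    omega
  have hcast := congrArg (fun n : ℕ ↦ χ (n : ZMod p)) hmul
  simp only [Nat.cast_mul, map_mul, Nat.cast_add p, CharP.cast_eq_zero, zero_add] at hcast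
  rw [h.map_natCast_eq_one (Nat.succ_ne_zero _) hlt (hlt.trans hqp), one_mul,
    h.map_natCast_eq_one (N := q - p % q) (by omega) (by omega) (by omega)] at hcast
  exact h.1.2 (Or.inr hcast)

theorem sub_one_sq_lt (h : IsLeastPrimeNonresidue χ q) : (q - 1) ^ 2 < p := by
  have hq : 1 < q := h.1.1.one_lt
  calc (q - 1) ^ 2 < q * (q - 1) := by
        rw [sq]
        exact Nat.mul_lt_mul_of_pos_right (by omega) (by omega)
    _ ≤ q * (p / q) := Nat.mul_le_mul_left _ (Nat.sub_le_of_le_add h.le_div_add_one)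
    _ ≤ p := Nat.mul_div_le p q

theorem ne_one (h : IsLeastPrimeNonresidue χ q) : χ ≠ 1 := by
  rintro rfl
  refine h.1.2 ?_
  by_cases hunit : IsUnit (q : ZMod p)
  · exact Or.inr (MulChar.one_apply hunit)
  · exact Or.inl (MulChar.map_nonunit _ hunit)

end IsLeastPrimeNonresidue

theorem exists_mul_eq_sub_one_and_pow_eq_one (hχ : χ ≠ 1) :
    ∃ ℓ m : ℕ, 2 ≤ ℓ ∧ ℓ * m = p - 1 ∧ ∀ u : ZMod p, χ u = 1 → u ^ m = 1 := by
  let K := χ.toUnitHom.ker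
  refine ⟨K.index, Nat.card K, ?_, ?_, fun u hu ↦ ?_⟩
  · have hindex : K.index ≠ 1 := by
      refine fun hindex ↦ hχ (MulChar.ext fun u ↦ ?_)
      have hu : u ∈ K := Subgroup.index_eq_one.1 hindex ▸ Subgroup.mem_top u
      rw [MulChar.one_apply_coe, ← MulChar.coe_toUnitHom, MonoidHom.mem_ker.1 hu, Units.val_one]
    have := Subgroup.FiniteIndex.index_ne_zero (H := K)
    omega
  · rw [Subgroup.index_mul_card, Nat.card_eq_fintype_card, ZMod.card_units]
  · have hunit : IsUnit u := by
      by_contra hnon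
      rw [MulChar.map_nonunit χ hnon] at hu
      have := subsingleton_of_zero_eq_one hu
      exact hχ (MulChar.ext fun _ ↦ Subsingleton.elim _ _)
    lift u to (ZMod p)ˣ using hunit
    have huK : u ∈ K := MonoidHom.mem_ker.2 (Units.ext hu)
    have hpow : u ^ Nat.card K = 1 := congrArg Subtype.val (pow_card_eq_one' (x := (⟨u, huK⟩ : K)))
    rw [← Units.val_pow_eq_pow_val, hpow, Units.val_one]

end LeastPrimeNonresidue

section Bounds

theorem pow_clog_lt_mul {b x : ℕ} (hb : 1 < b) (hx : 1 < x) : b ^ Nat.clog b x < x * b := by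
  calc b ^ Nat.clog b x = b ^ (Nat.clog b x - 1) * b := by
        rw [← pow_succ, Nat.sub_add_cancel (Nat.clog_pos hb hx)]
    _ < x * b := Nat.mul_lt_mul_of_pos_right (Nat.pow_pred_clog_lt_self hb hx) (by omega)

theorem six_mul_log_two_le_log {T : ℝ} (hT : 64 ≤ T) : 6 * Real.log 2 ≤ Real.log T := by
  calc 6 * Real.log 2 = Real.log (2 ^ 6) := by rw [Real.log_pow, Nat.cast_ofNat]
    _ ≤ Real.log T := Real.log_le_log (by norm_num) (by linarith)

theorem clog_four_mul_add_one_le_mul_log {ℓ s : ℕ} {T : ℝ} (hℓ : 2 ≤ ℓ) (hs : 0 < s)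
    (hsT : s ≤ T ^ 2) (hT : 64 ≤ T) : (Nat.clog ℓ (4 * s) : ℝ) + 1 ≤ 4 * Real.log T := by
  set H := Nat.clog ℓ (4 * s)
  have hH : 1 ≤ H := Nat.clog_pos hℓ (by omega)
  have hpow : (2 : ℝ) ^ (H - 1) ≤ 2 ^ 2 * T ^ 2 := by
    have hpow : 2 ^ (H - 1) ≤ 4 * s :=
      (Nat.pow_le_pow_left hℓ _).trans (Nat.pow_pred_clog_lt_self hℓ (by omega)).le
    have hpow : (2 : ℝ) ^ (H - 1) ≤ 4 * s := mod_cast hpow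
    linarith
  have hlog : ((H : ℝ) - 3) * Real.log 2 ≤ 2 * Real.log T := by
    have hlog := Real.log_le_log (by positivity) hpow
    rw [Real.log_mul (by norm_num) (by positivity), Real.log_pow, Real.log_pow, Real.log_pow,
      Nat.cast_sub hH] at hlog
    push_cast at hlog
    linarith
  nlinarith [Real.log_two_gt_d9, six_mul_log_two_le_log hT]

theorem exists_stepanov_parameter {p r s H : ℕ} (hs : 9 ≤ s) (hsp : s ^ 2 ≤ p) (hsr : 4 * s ≤ r)
    (hrp : 4 * (r * (H + 1)) ≤ p) (hH : 0 < H) :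
    ∃ D, r * (D + H) < p ∧ ∑ i ∈ range s, (D + i * H + H) < r * H * D := by
  have hr : 0 < r := by omega
  have hsp' : 9 * s ≤ p := by nlinarith
  have hHdiv : H ≤ (p - 1) / r := by
    rw [Nat.le_div_iff_mul_le hr, mul_comm]
    rw [mul_add_one] at hrp
    omega
  refine ⟨(p - 1) / r - H, ?_, ?_⟩
  · rw [Nat.sub_add_cancel hHdiv]
    have := Nat.mul_div_le (p - 1) r
    omega
  obtain ⟨D, hD⟩ := Nat.exists_eq_add_of_le' hHdiv
  rw [hD, Nat.add_sub_cancel]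
  have hrD : 3 * p ≤ 4 * (r * D) := by
    have hle : p ≤ r * (D + H + 1) := by
      have hlt := Nat.lt_mul_div_succ (p - 1) hr
      rw [hD] at hlt
      omega
    linarith
  have hsD : 4 * (s * D) ≤ H * (r * D) := by
    calc 4 * (s * D) = 4 * s * D := by ring
      _ ≤ r * D := Nat.mul_le_mul_right D hsr
      _ ≤ H * (r * D) := Nat.le_mul_of_pos_left _ hH
  have hsum : 2 * ∑ i ∈ range s, (D + i * H + H) + H * s = 2 * (s * (D + H)) + H * s ^ 2 := by
    have hid : (∑ i ∈ range s, i) * 2 + s = s ^ 2 := by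
      rw [sum_range_id_mul_two, Nat.mul_sub_one, sq, Nat.sub_add_cancel (Nat.le_mul_self s)]
    simp only [sum_add_distrib, ← sum_mul, sum_const, card_range, smul_eq_mul]
    linear_combination H * hid
  have hH' : H * (8 * s ^ 2 + 8 * s) < H * (12 * (r * D)) :=
    Nat.mul_lt_mul_of_pos_left (by nlinarith) hH
  nlinarith

variable {p ℓ m B : ℕ} [Fact p.Prime]

theorem card_le_of_forall_add_pow_eq_one {R : Type*} [CommRing R] [IsDomain R] (hm : 0 < m) (a : R)
    {A : Finset R} (hA : ∀ x ∈ A, (x + a) ^ m = 1) : #A ≤ m := by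
  classical
  calc #A = #(A.map (addRightEmbedding a)) := (card_map _).symm
    _ ≤ #(nthRoots m (1 : R)).toFinset := card_le_card fun y hy ↦ by
        obtain ⟨x, hx, rfl⟩ := mem_map.1 hy
        exact Multiset.mem_toFinset.2 ((mem_nthRoots hm).2 (hA x hx))
    _ ≤ m := (Multiset.toFinset_card_le _).trans (card_nthRoots m 1)

theorem sq_le_eight_mul_of_forall_pow_eq_one (hm : 0 < m) (hB : 2 ≤ B) (hBp : B ^ 2 < p)
    (hpow : ∀ N ∈ Icc 1 B, (N : ZMod p) ^ m = 1) : B ^ 2 ≤ 8 * m := by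
  obtain ⟨A, hA, hcard⟩ := exists_finset_forall_add_pow_eq_one zero_lt_one hB hBp hpow
  have := card_le_of_forall_add_pow_eq_one hm _ fun x hx ↦ hA x hx 1 (mem_Icc.2 ⟨le_rfl, le_rfl⟩)
  omega

theorem mul_sq_le_of_forall_pow_eq_one {s H : ℕ} (hs : 9 ≤ s) (hsp : s ^ 2 ≤ p)
    (hsℓ : 4 * s ≤ ℓ ^ H) (hℓp : 4 * (ℓ ^ H * (H + 1)) ≤ p) (hH : 0 < H) (hm : ℓ * m = p - 1)
    (hHB : 2 * H ≤ B) (hBp : B ^ 2 < p) (hpow : ∀ N ∈ Icc 1 B, (N : ZMod p) ^ m = 1) :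
    s * B ^ 2 ≤ 16 * H ^ 2 * p := by
  obtain ⟨A, hA, hcard⟩ := exists_finset_forall_add_pow_eq_one hH hHB hBp hpow
  obtain ⟨D, hD, hcount⟩ := exists_stepanov_parameter hs hsp hsℓ hℓp hH
  have hHp : H < p := by nlinarith
  let a (h : Fin H) : ZMod p := ((h + 1 : ℕ) : ZMod p)
  have hval (h : Fin H) : (a h).val = h + 1 := ZMod.val_cast_of_lt (by omega)
  have ha : Function.Injective a := fun h h' heq ↦ by
    simpa [hval, Fin.ext_iff] using congrArg ZMod.val heq
  have ha0 (h : Fin H) : a h ≠ 0 := fun h0 ↦ by simpa [h0] using hval h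
  have hchar : s ≤ ringChar (ZMod p) := by
    rw [ZMod.ringChar_zmod_n]
    exact (Nat.le_self_pow two_ne_zero s).trans hsp
  have hstepanov : s * #A ≤ p * (H + H) := by
    simpa using mul_card_le_of_forall_shift_pow_eq_one (by simpa using hm) ha ha0 H
      (by simpa using hD) hchar (by simpa using hcount)
      (fun x hx h ↦ hA x hx (h + 1) (mem_Icc.2 ⟨by omega, by omega⟩))
  calc s * B ^ 2 ≤ s * (8 * H * #A) := Nat.mul_le_mul_left _ hcard
    _ = 8 * H * (s * #A) := by ring
    _ ≤ 8 * H * (p * (H + H)) := Nat.mul_le_mul_left _ hstepanov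
    _ = 16 * H ^ 2 * p := by ring

variable {T : ℝ}

theorem sq_le_of_sq_lt_mul_index (hTp : T ^ 4 = p) (hℓ : T ^ 2 < 16 * Real.log p * ℓ)
    (hm : ℓ * m = p - 1) (hB : 2 ≤ B) (hBp : B ^ 2 < p)
    (hpow : ∀ N ∈ Icc 1 B, (N : ZMod p) ^ m = 1) : (B : ℝ) ^ 2 ≤ 128 * Real.log p * T ^ 2 := by
  have hp := (Fact.out : p.Prime).one_lt
  obtain ⟨hℓ0, hm0⟩ : 0 < ℓ ∧ 0 < m := CanonicallyOrderedAdd.mul_pos.1 (by omega)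
  have hmp : (ℓ : ℝ) * m ≤ T ^ 4 := by
    rw [hTp]
    exact_mod_cast hm.le.trans (Nat.sub_le p 1)
  have hm' : (m : ℝ) ≤ 16 * Real.log p * T ^ 2 := by
    refine le_of_mul_le_mul_left (a := (ℓ : ℝ)) ?_ (mod_cast hℓ0)
    nlinarith [sq_nonneg T]
  have hB8 : (B : ℝ) ^ 2 ≤ 8 * m := mod_cast sq_le_eight_mul_of_forall_pow_eq_one hm0 hB hBp hpow
  linarith

theorem mul_sq_le_of_mul_index_le_sq (hT : 64 ≤ T) (hTp : T ^ 4 = p)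
    (hℓT : 16 * Real.log p * ℓ ≤ T ^ 2) (hℓ : 2 ≤ ℓ) (hm : ℓ * m = p - 1)
    (hB : 2 * Real.log p ≤ B) (hBp : B ^ 2 < p)
    (hpow : ∀ N ∈ Icc 1 B, (N : ZMod p) ^ m = 1) :
    0.99 * (B : ℝ) ^ 2 ≤ 16 * Real.log p ^ 2 * T ^ 2 := by
  have hlog : Real.log p = 4 * Real.log T := by
    rw [← hTp, Real.log_pow, Nat.cast_ofNat]
  set s := Nat.sqrt p
  have hsp : s ^ 2 ≤ p := Nat.sqrt_le' p
  have hsqrt : √p = T ^ 2 := by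
    rw [← hTp, show T ^ 4 = (T ^ 2) ^ 2 by ring, Real.sqrt_sq (by positivity)]
  have hsT : (s : ℝ) ≤ T ^ 2 := hsqrt ▸ Real.nat_sqrt_le_real_sqrt
  have hTs : T ^ 2 ≤ s + 1 := hsqrt ▸ Real.real_sqrt_le_nat_sqrt_succ
  have hs : 0.99 * T ^ 2 ≤ s := by nlinarith
  have hs9 : 9 ≤ s := by
    have : (9 : ℝ) ≤ s := by nlinarith
    exact_mod_cast this
  -- The least number of shifts for which Stepanov's method yields zeros of order `s`, about `√p`.
  set H := Nat.clog ℓ (4 * s)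
  have hH : 0 < H := Nat.clog_pos hℓ (by omega)
  have hHlog : (H : ℝ) + 1 ≤ Real.log p :=
    hlog ▸ clog_four_mul_add_one_le_mul_log hℓ (by omega) hsT hT
  have hℓp : 4 * (ℓ ^ H * (H + 1)) ≤ p := by
    have hpow : (ℓ : ℝ) ^ H ≤ 4 * s * ℓ := mod_cast (pow_clog_lt_mul hℓ (by omega)).le
    rify
    calc 4 * ((ℓ : ℝ) ^ H * (H + 1)) ≤ 4 * (4 * s * ℓ * Real.log p) := by gcongr
      _ = s * (16 * Real.log p * ℓ) := by ring
      _ ≤ T ^ 2 * T ^ 2 := by gcongr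
      _ = p := by rw [← hTp]; ring
  have hHB : 2 * H ≤ B := by
    rify
    linarith
  have hbound : (s : ℝ) * B ^ 2 ≤ 16 * H ^ 2 * p := mod_cast
    mul_sq_le_of_forall_pow_eq_one hs9 hsp (Nat.le_pow_clog hℓ _) hℓp hH hm hHB hBp hpow
  refine le_of_mul_le_mul_left (a := T ^ 2) ?_ (by positivity)
  calc T ^ 2 * (0.99 * (B : ℝ) ^ 2) = 0.99 * T ^ 2 * B ^ 2 := by ring
    _ ≤ (s : ℝ) * B ^ 2 := by gcongr
    _ ≤ 16 * (H : ℝ) ^ 2 * p := hbound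
    _ ≤ 16 * Real.log p ^ 2 * p := by
        gcongr
        linarith
    _ = T ^ 2 * (16 * Real.log p ^ 2 * T ^ 2) := by rw [← hTp]; ring

theorem le_mul_log_of_forall_pow_eq_one (hT : 64 ≤ T) (hTp : T ^ 4 = p) (hℓ : 2 ≤ ℓ)
    (hm : ℓ * m = p - 1) (hBp : B ^ 2 < p) (hpow : ∀ N ∈ Icc 1 B, (N : ZMod p) ^ m = 1) :
    (B : ℝ) ≤ 4.1 * T * Real.log p := by
  have hlog : 16 ≤ Real.log p := by
    rw [← hTp, Real.log_pow]
    push_cast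
    linarith [Real.log_two_gt_d9, six_mul_log_two_le_log hT]
  by_contra! hlt
  have hB : 2 * Real.log p ≤ B := by nlinarith
  have hB2 : 2 ≤ B := by
    rify
    linarith
  have hsq : (4.1 * T * Real.log p) ^ 2 < (B : ℝ) ^ 2 := by gcongr
  have hTL : 0 < T ^ 2 * Real.log p := by positivity
  rcases lt_or_ge (T ^ 2) (16 * Real.log p * ℓ) with hlarge | hsmall
  · have := sq_le_of_sq_lt_mul_index hTp hlarge hm hB2 hBp hpow
    nlinarith
  · have := mul_sq_le_of_mul_index_le_sq hT hTp hsmall hℓ hm hB hBp hpow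
    nlinarith

theorem sq_add_one_lt_mul_log {t : ℝ} (h1 : 1.3 ≤ t) (h64 : t ≤ 64) :
    t ^ 2 + 1 < 18.8 * t * Real.log t := by
  rcases le_total t 16 with h16 | h16
  · have hlog : t * (1 - t⁻¹) ≤ t * Real.log t := by
      gcongr
      exact Real.one_sub_inv_le_log_of_pos (by linarith)
    rw [mul_sub, mul_inv_cancel₀ (by linarith)] at hlog
    nlinarith
  · have hlog16 : 2.77 ≤ Real.log 16 := by
      rw [show (16 : ℝ) = 2 ^ 4 by norm_num, Real.log_pow]
      linarith [Real.log_two_gt_d9]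
    have hlog : 3.77 - 16 * t⁻¹ ≤ Real.log t := by
      have := Real.one_sub_inv_le_log_of_pos (show 0 < t / 16 by linarith)
      rw [Real.log_div (by linarith) (by norm_num), inv_div, div_eq_mul_inv] at this
      linarith
    have hlog : t * (3.77 - 16 * t⁻¹) ≤ t * Real.log t := by gcongr
    rw [mul_sub, mul_left_comm, mul_inv_cancel₀ (by linarith)] at hlog
    nlinarith

end Bounds

theorem norton_bound_general {p : ℕ} [Fact p.Prime] {R : Type*} [CommMonoidWithZero R]
    {χ : DirichletCharacter R p} {q : ℕ} (hq : IsLeastPrimeNonresidue χ q) :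
    (q : ℝ) < 4.7 * (p : ℝ) ^ ((1 : ℝ) / 4) * Real.log p := by
  set T : ℝ := (p : ℝ) ^ ((1 : ℝ) / 4)
  have hT : 0 ≤ T := by positivity
  have hTp : T ^ 4 = p := by
    rw [← Real.rpow_natCast, ← Real.rpow_mul (by positivity)]
    norm_num
  have hlog : Real.log p = 4 * Real.log T := by rw [← hTp, Real.log_pow, Nat.cast_ofNat]
  have hqp := hq.lt_modulus
  have hq2 := hq.1.1.two_le
  have hsq := hq.sub_one_sq_lt
  rcases le_total T 64 with hsmall | hlarge
  · have hqT : (q : ℝ) - 1 < T ^ 2 := by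
      rify [hq.1.1.one_le] at hsq
      exact lt_of_pow_lt_pow_left₀ 2 (sq_nonneg T) (by linarith)
    have hT1 : 1.3 ≤ T := by
      have hp : (3 : ℝ) ≤ p := mod_cast (by omega : 3 ≤ p)
      exact le_of_pow_le_pow_left₀ four_ne_zero hT (by linarith)
    rw [hlog]
    linarith [sq_add_one_lt_mul_log hT1 hsmall]
  · obtain ⟨ℓ, m, hℓ, hm, hpow⟩ := exists_mul_eq_sub_one_and_pow_eq_one hq.ne_one
    have hbound := le_mul_log_of_forall_pow_eq_one hlarge hTp hℓ hm hsq fun N hN ↦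
      hpow N (hq.map_natCast_eq_one (by grind) (by grind) (by grind))
    rw [Nat.cast_pred hq.1.1.pos] at hbound
    nlinarith [Real.log_two_gt_d9, six_mul_log_two_le_log hlarge]

theorem norton_bound (p : ℕ) [Fact p.Prime]
    (χ : DirichletCharacter ℂ p) (hχ : χ ≠ 1)
    (q₁ : ℕ) (hq₁ : q₁.Prime)
    (hnr₁ : χ (q₁ : ZMod p) ∉ ({0, 1} : Set ℂ))
    (hmin₁ : ∀ q : ℕ, q.Prime → χ (q : ZMod p) ∉ ({0, 1} : Set ℂ) → q₁ ≤ q) :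
    (q₁ : ℝ) < 4.7 * (p : ℝ) ^ ((1:ℝ)/4) * Real.log p :=
  norton_bound_general ⟨⟨hq₁, hnr₁⟩, fun q hq ↦ hmin₁ q hq.1 hq.2⟩
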